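/- Assume the loss ℓ(w,x,y) takes values in [0,1]. Then the standard expected generalization error gen = E[(1/n) Σ_{i=1}^n (ℓ(W,Z_i^{−U_i}) − ℓ(W,Z_i^{U_i}))] satisfies |gen| ≤ E_{Y'~P_Y}[E_{Z_{[2n]}}[(1/n^{Y'}) Σ_{i=1}^n sqrt(2·max(𝟙{Y_i^-=Y'}, 𝟙{Y_i^+=Y'})·I_{Z_{[2n]}}(W;U_i))]]. -/

import Mathlib

open MeasureTheory ProbabilityTheory
open scoped ENNReal

noncomputable section

open Classical in
/-- Kullback–Leibler divergence: `∞` unless `μ ≪ ν` and the log-likelihood ratio is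
`μ`-integrable. -/
def KL {α : Type*} [MeasurableSpace α] (μ ν : Measure α) : ℝ≥0∞ :=
  if μ ≪ ν ∧ Integrable (llr μ ν) μ then ENNReal.ofReal (∫ x, llr μ ν x ∂μ) else ∞

/-- Fair coin measure on `Bool` (the law of a uniform `{−1,+1}` selector, `true ↔ +1`). -/
def coin : Measure Bool :=
  (2 : ℝ≥0∞)⁻¹ • Measure.dirac true + (2 : ℝ≥0∞)⁻¹ • Measure.dirac false

/-- Disintegrated conditional mutual information `I_z(A;B)` given `Z = z`, defined through
regular conditional distributions: `KL(P_{A,B|Z=z} ‖ P_{A|Z=z} ⊗ P_{B|Z=z})`. -/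
def dCMI {Ω γ α β : Type*} [MeasurableSpace Ω] [MeasurableSpace γ]
    [MeasurableSpace α] [StandardBorelSpace α] [Nonempty α]
    [MeasurableSpace β] [StandardBorelSpace β] [Nonempty β]
    (μ : Measure Ω) [IsFiniteMeasure μ]
    (A : Ω → α) (B : Ω → β) (Z : Ω → γ) (z : γ) : ℝ≥0∞ :=
  KL (condDistrib (fun ω => (A ω, B ω)) Z μ z)
    ((condDistrib A Z μ z).prod (condDistrib B Z μ z))

/-- The super-sample entry selected by `u`, i.e. `z^{u}` (the training sample):
`zz = (z⁻, z⁺)` and `u = true` means `+1`. -/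
def trainSel {𝒵 : Type*} (zz : 𝒵 × 𝒵) (u : Bool) : 𝒵 := if u then zz.2 else zz.1

/-- The super-sample entry not selected by `u`, i.e. `z^{−u}` (the test sample). -/
def testSel {𝒵 : Type*} (zz : 𝒵 × 𝒵) (u : Bool) : 𝒵 := if u then zz.1 else zz.2

instance coin_isProb : IsProbabilityMeasure coin := by
  constructor
  simp [coin, ENNReal.inv_two_add_inv_two]

lemma integral_coin (f : Bool → ℝ) : ∫ u, f u ∂coin = (f true + f false) / 2 := by
  rw [coin, integral_add_measure (Integrable.smul_measure Integrable.of_finite (by simp))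
    (Integrable.smul_measure Integrable.of_finite (by simp)),
    integral_smul_measure, integral_smul_measure]
  simp
  ring

lemma KL_bound {α : Type*} [MeasurableSpace α] (P : Measure α) [IsProbabilityMeasure P]
    (p : Measure (α × Bool)) [IsProbabilityMeasure p] (f : α × Bool → ℝ) (hf : Measurable f)
    (hf1 : ∀ x, |f x| ≤ 1) (hanti : ∀ w, f (w, false) = - f (w, true)) :
    ENNReal.ofReal |∫ x, f x ∂p| ≤ (2 * KL p (P.prod coin)) ^ (1 / 2 : ℝ) := by
  unfold KL
  split_ifs with h
  swap
  · have : (2 : ℝ≥0∞) * ∞ = ∞ := ENNReal.mul_top (by norm_num)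
    rw [this, ENNReal.top_rpow_of_pos (by norm_num)]
    exact le_top
  obtain ⟨hac, hint⟩ := h
  set a := ∫ x, f x ∂p with ha
  have hafi : ∀ (q : Measure (α × Bool)) [IsProbabilityMeasure q],
      Integrable (fun x => a * f x) q := by
    intro q _
    refine Integrable.of_bound (C := |a|) (by fun_prop) (ae_of_all _ fun x => ?_)
    rw [Real.norm_eq_abs, abs_mul]
    exact mul_le_of_le_one_right (abs_nonneg _) (hf1 x)
  have hexp : Integrable (fun x => Real.exp (a * f x)) (P.prod coin) := by
    refine Integrable.of_bound (C := Real.exp |a|) (by fun_prop) (ae_of_all _ fun x => ?_)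
    rw [Real.norm_eq_abs, Real.abs_exp]
    refine Real.exp_le_exp.2 ((le_abs_self _).trans ?_)
    rw [abs_mul]
    exact mul_le_of_le_one_right (abs_nonneg _) (hf1 x)
  have hmgf : ∫ x, Real.exp (a * f x) ∂(P.prod coin) ≤ Real.exp (a ^ 2 / 2) := by
    rw [integral_prod _ hexp]
    have : ∀ w, ∫ u, Real.exp (a * f (w, u)) ∂coin ≤ Real.exp (a ^ 2 / 2) := by
      intro w
      rw [integral_coin, hanti, mul_neg, ← Real.cosh_eq]
      refine (Real.cosh_le_exp_half_sq _).trans (Real.exp_le_exp.2 ?_)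
      have h1 : f (w, true) ^ 2 ≤ 1 := by
        have := hf1 (w, true)
        rwa [sq_le_one_iff_abs_le_one]
      have : (a * f (w, true)) ^ 2 ≤ a ^ 2 := by
        rw [mul_pow]; exact mul_le_of_le_one_right (sq_nonneg _) h1
      linarith
    calc _ ≤ ∫ w, Real.exp (a ^ 2 / 2) ∂P :=
          integral_mono hexp.integral_prod_left (integrable_const _) this
      _ = _ := by simp
  have hpos : 0 < ∫ x, Real.exp (a * f x) ∂(P.prod coin) := integral_exp_pos hexp
  have hlog : Real.log (∫ x, Real.exp (a * f x) ∂(P.prod coin)) ≤ a ^ 2 / 2 := by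
    rw [Real.log_le_iff_le_exp hpos]; exact hmgf
  have htp := isProbabilityMeasure_tilted hexp
  have hac' : p ≪ (P.prod coin).tilted (fun x => a * f x) :=
    hac.trans (absolutelyContinuous_tilted hexp)
  have hnn := InformationTheory.integral_llr_add_sub_measure_univ_nonneg hac'
    (integrable_llr_tilted_right hac (hafi p) hint hexp)
  rw [integral_llr_tilted_right hac (hafi p) hexp hint, integral_const_mul, ← ha] at hnn
  simp only [probReal_univ] at hnn
  have hK : a ^ 2 ≤ 2 * ∫ x, llr p (P.prod coin) x ∂p := by nlinarith
  have h2 : (2 : ℝ≥0∞) = ENNReal.ofReal 2 := by simp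
  rw [h2, ← ENNReal.ofReal_mul (by norm_num),
    ENNReal.ofReal_rpow_of_nonneg ((sq_nonneg a).trans hK) (by norm_num), ← Real.sqrt_eq_rpow]
  exact ENNReal.ofReal_le_ofReal (Real.abs_le_sqrt hK)

lemma cond_coin {Ω γ : Type*} [MeasurableSpace Ω] [MeasurableSpace γ] (μ : Measure Ω)
    [IsProbabilityMeasure μ] {n : ℕ} (Q : Measure γ) [IsProbabilityMeasure Q]
    (Z : Ω → γ) (hZ : Measurable Z)
    (U : Ω → Fin n → Bool) (hU : Measurable U)
    (hlaw : μ.map (fun ω => (Z ω, U ω)) = Q.prod (Measure.pi fun _ : Fin n => coin))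
    (i : Fin n) :
    ∀ᵐ z ∂(μ.map Z), condDistrib (fun ω => U ω i) Z μ z = coin := by
  have hQ : μ.map Z = Q := by
    have := congrArg Measure.fst hlaw
    rwa [Measure.fst_map_prodMk hU, Measure.fst_prod] at this
  have hUi : Measurable (fun ω => U ω i) := by fun_prop
  have : condDistrib (fun ω => U ω i) Z μ =ᵐ[μ.map Z] Kernel.const γ coin := by
    refine condDistrib_ae_eq_of_measure_eq_compProd Z hUi.aemeasurable ?_
    rw [Measure.compProd_const, hQ]
    have h1 : (fun ω => (Z ω, U ω i)) =
        Prod.map id (fun u : Fin n → Bool => u i) ∘ (fun ω => (Z ω, U ω)) := rfl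
    rw [h1, ← Measure.map_map (by fun_prop) (by fun_prop), hlaw,
      ← Measure.map_prod_map _ _ (by fun_prop) (by fun_prop), Measure.map_id]
    congr 1
    exact (measurePreserving_eval (fun _ : Fin n => coin) i).map_eq
  filter_upwards [this] with z hz
  rw [hz, Kernel.const_apply]

lemma abs_term {Ω γ 𝒲 : Type*} [MeasurableSpace Ω] [MeasurableSpace γ] [MeasurableSpace 𝒲]
    [StandardBorelSpace 𝒲] [Nonempty 𝒲] (μ : Measure Ω)
    [IsProbabilityMeasure μ] 
    (Z : Ω → γ) (hZ : Measurable Z)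
    (B : Ω → Bool) (hB : Measurable B) (W : Ω → 𝒲) (hW : Measurable W)
    (hc : ∀ᵐ z ∂(μ.map Z), condDistrib B Z μ z = coin)
    (f : γ → 𝒲 × Bool → ℝ) (hf : Measurable fun p : γ × (𝒲 × Bool) => f p.1 p.2)
    (hf1 : ∀ z x, |f z x| ≤ 1) (hanti : ∀ z w, f z (w, false) = - f z (w, true)) :
    ∃ h : γ → ℝ≥0∞, Measurable h ∧
      (∀ᵐ z ∂(μ.map Z), h z ≤ (2 * dCMI μ W B Z z) ^ (1 / 2 : ℝ)) ∧
      ENNReal.ofReal |∫ ω, f (Z ω) (W ω, B ω) ∂μ| ≤ ∫⁻ z, h z ∂(μ.map Z) := by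
  have := Measure.isProbabilityMeasure_map (μ := μ) hZ.aemeasurable
  refine ⟨fun z => ENNReal.ofReal |∫ x, f z x ∂(condDistrib (fun ω => (W ω, B ω)) Z μ z)|,
    ?_, ?_, ?_⟩
  · have := (hf.stronglyMeasurable.integral_kernel_prod_right' 
      (κ := condDistrib (fun ω => (W ω, B ω)) Z μ)).measurable
    fun_prop
  · filter_upwards [hc] with z hz
    unfold dCMI
    rw [hz]
    exact KL_bound _ _ _ (by fun_prop) (hf1 z) (hanti z)
  · have hm : Measurable fun ω => (Z ω, (W ω, B ω)) := by fun_prop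
    have hi : Integrable (fun p : γ × (𝒲 × Bool) => f p.1 p.2)
        (μ.map Z ⊗ₘ condDistrib (fun ω => (W ω, B ω)) Z μ) :=
      Integrable.of_bound (C := 1) hf.aestronglyMeasurable (ae_of_all _ fun x => hf1 _ _)
    have : ∫ ω, f (Z ω) (W ω, B ω) ∂μ =
        ∫ z, ∫ x, f z x ∂(condDistrib (fun ω => (W ω, B ω)) Z μ z) ∂(μ.map Z) := by
      rw [← Measure.integral_compProd hi, compProd_map_condDistrib (by fun_prop),
        integral_map hm.aemeasurable hf.aestronglyMeasurable]
    rw [this]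
    simp_rw [← Real.enorm_eq_ofReal_abs]
    exact enorm_integral_le_lintegral_enorm _

/-- **Corollary C.2 (label-dependent CMI bound for the standard generalization error)**:
in the super-sample setting with a bounded loss `ℓ(w,x,y) ∈ [0,1]`, the standard expected
generalization error satisfies
`|gen| ≤ E_{Y'∼P_Y}[E_{Z_{[2n]}}[(1/n^{Y'}) Σ_i
    sqrt (2 max(𝟙{Y_i⁻=Y'},𝟙{Y_i⁺=Y'}) I_{Z_{[2n]}}(W;U_i))]]`. -/
theorem standard_gen_classwise_CMI_bound
    {Ω 𝒲 𝒳 𝒴 : Type*}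
    [mΩ : MeasurableSpace Ω] [StandardBorelSpace Ω] [Nonempty Ω]
    [MeasurableSpace 𝒲] [StandardBorelSpace 𝒲] [Nonempty 𝒲]
    [MeasurableSpace 𝒳] [StandardBorelSpace 𝒳]
    [MeasurableSpace 𝒴] [Countable 𝒴] [MeasurableSingletonClass 𝒴] [DecidableEq 𝒴]
    (μ : Measure Ω) [IsProbabilityMeasure μ]
    (n : ℕ) (hn : 0 < n)
    (PZ : Measure (𝒳 × 𝒴)) [IsProbabilityMeasure PZ]
    (Z : Ω → Fin n → (𝒳 × 𝒴) × (𝒳 × 𝒴)) (hZ : Measurable Z)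
    (U : Ω → Fin n → Bool) (hU : Measurable U)
    (W : Ω → 𝒲) (hW : Measurable W)
    (hlaw : μ.map (fun ω => (Z ω, U ω)) =
      (Measure.pi fun _ : Fin n => PZ.prod PZ).prod (Measure.pi fun _ : Fin n => coin))
    (hSle : MeasurableSpace.comap (fun ω (i : Fin n) => trainSel (Z ω i) (U ω i))
        inferInstance ≤ mΩ)
    (hMarkov : CondIndepFun
      (MeasurableSpace.comap (fun ω (i : Fin n) => trainSel (Z ω i) (U ω i)) inferInstance)
      hSle W (fun ω => (Z ω, U ω)) μ)
    (ℓ : 𝒲 → 𝒳 → 𝒴 → ℝ) (hℓ : Measurable fun p : 𝒲 × 𝒳 × 𝒴 => ℓ p.1 p.2.1 p.2.2)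
    (hℓ01 : ∀ w x y', ℓ w x y' ∈ Set.Icc (0 : ℝ) 1) :
    ENNReal.ofReal
        |∫ ω, (1 / (n : ℝ)) *
            ∑ i, (ℓ (W ω) (testSel (Z ω i) (U ω i)).1 (testSel (Z ω i) (U ω i)).2 -
                  ℓ (W ω) (trainSel (Z ω i) (U ω i)).1 (trainSel (Z ω i) (U ω i)).2) ∂μ|
      ≤ ∫⁻ y, (∫⁻ z, ENNReal.ofReal (1 / ((n : ℝ) * (PZ (Prod.snd ⁻¹' {y})).toReal)) *
            ∑ i, (2 * max (if (z i).1.2 = y then (1 : ℝ≥0∞) else 0)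
                          (if (z i).2.2 = y then (1 : ℝ≥0∞) else 0) *
                  dCMI μ W (fun ω => U ω i) Z z) ^ (1 / 2 : ℝ)
            ∂(μ.map Z))
          ∂(PZ.map Prod.snd) := by
  have hnR : (0 : ℝ) < n := by exact_mod_cast hn
  set Q : Measure (Fin n → (𝒳 × 𝒴) × (𝒳 × 𝒴)) := Measure.pi fun _ : Fin n => PZ.prod PZ with hQdef
  have hQ : μ.map Z = Q := by
    have := congrArg Measure.fst hlaw
    rwa [Measure.fst_map_prodMk hU, Measure.fst_prod] at this
  -- the signed loss difference
  let g : Fin n → (Fin n → (𝒳 × 𝒴) × (𝒳 × 𝒴)) → 𝒲 → ℝ := fun i z w =>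
    ℓ w (z i).1.1 (z i).1.2 - ℓ w (z i).2.1 (z i).2.2
  let f : Fin n → (Fin n → (𝒳 × 𝒴) × (𝒳 × 𝒴)) → 𝒲 × Bool → ℝ := fun i z x =>
    if x.2 = true then g i z x.1 else - g i z x.1
  have hfm : ∀ i, Measurable fun p : (Fin n → (𝒳 × 𝒴) × (𝒳 × 𝒴)) × (𝒲 × Bool) =>
      f i p.1 p.2 := by
    intro i
    have h1 : Measurable fun p : (Fin n → (𝒳 × 𝒴) × (𝒳 × 𝒴)) × (𝒲 × Bool) =>
        g i p.1 p.2.1 := by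
      refine Measurable.sub ?_ ?_
      · exact hℓ.comp (g := fun p : 𝒲 × 𝒳 × 𝒴 => ℓ p.1 p.2.1 p.2.2)
          (f := fun p : (Fin n → (𝒳 × 𝒴) × (𝒳 × 𝒴)) × (𝒲 × Bool) =>
            (p.2.1, (p.1 i).1.1, (p.1 i).1.2)) (by fun_prop)
      · exact hℓ.comp (g := fun p : 𝒲 × 𝒳 × 𝒴 => ℓ p.1 p.2.1 p.2.2)
          (f := fun p : (Fin n → (𝒳 × 𝒴) × (𝒳 × 𝒴)) × (𝒲 × Bool) =>
            (p.2.1, (p.1 i).2.1, (p.1 i).2.2)) (by fun_prop)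
    refine Measurable.ite ?_ h1 h1.neg
    exact (measurable_snd.comp measurable_snd) (measurableSet_singleton true)
  have hg1 : ∀ i z w, |g i z w| ≤ 1 := by
    intro i z w
    have h1 := hℓ01 w (z i).1.1 (z i).1.2
    have h2 := hℓ01 w (z i).2.1 (z i).2.2
    rw [Set.mem_Icc] at h1 h2
    simp only [g]
    rw [abs_le]
    constructor <;> linarith [h1.1, h1.2, h2.1, h2.2]
  have hf1 : ∀ i z x, |f i z x| ≤ 1 := by
    intro i z x
    simp only [f]
    split_ifs
    · exact hg1 i z _
    · rw [abs_neg]; exact hg1 i z _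
  have hfeq : ∀ i ω, ℓ (W ω) (testSel (Z ω i) (U ω i)).1 (testSel (Z ω i) (U ω i)).2 -
      ℓ (W ω) (trainSel (Z ω i) (U ω i)).1 (trainSel (Z ω i) (U ω i)).2 =
      f i (Z ω) (W ω, U ω i) := by
    intro i ω
    cases h : U ω i <;> simp [f, g, testSel, trainSel]
  have key : ∀ i, ∃ h : (Fin n → (𝒳 × 𝒴) × (𝒳 × 𝒴)) → ℝ≥0∞, Measurable h ∧
      (∀ᵐ z ∂(μ.map Z), h z ≤ (2 * dCMI μ W (fun ω => U ω i) Z z) ^ (1 / 2 : ℝ)) ∧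
      ENNReal.ofReal |∫ ω, f i (Z ω) (W ω, U ω i) ∂μ| ≤ ∫⁻ z, h z ∂(μ.map Z) := by
    intro i
    exact abs_term μ Z hZ (fun ω => U ω i) (by fun_prop) W hW
      (cond_coin μ Q Z hZ U hU hlaw i) (f i) (hfm i) (hf1 i) (fun z w => by simp [f])
  choose h hm hle hint using key
  have hLHS : ENNReal.ofReal
        |∫ ω, (1 / (n : ℝ)) *
            ∑ i, (ℓ (W ω) (testSel (Z ω i) (U ω i)).1 (testSel (Z ω i) (U ω i)).2 -
                  ℓ (W ω) (trainSel (Z ω i) (U ω i)).1 (trainSel (Z ω i) (U ω i)).2) ∂μ| ≤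
      ENNReal.ofReal (1 / n) * ∑ i, ∫⁻ z, h i z ∂(μ.map Z) := by
    simp_rw [hfeq]
    have hi : ∀ i ∈ Finset.univ, Integrable (fun ω => f i (Z ω) (W ω, U ω i)) μ := by
      intro i _
      refine Integrable.of_bound (C := 1) ?_ (ae_of_all _ fun ω => hf1 i _ _)
      exact ((hfm i).comp (g := fun p : (Fin n → (𝒳 × 𝒴) × (𝒳 × 𝒴)) × (𝒲 × Bool) =>
        f i p.1 p.2) (f := fun ω => (Z ω, (W ω, U ω i))) (by fun_prop)).aestronglyMeasurable
    rw [integral_const_mul, integral_finsetSum _ hi, abs_mul, abs_of_pos (by positivity),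
      ENNReal.ofReal_mul (by positivity)]
    gcongr
    calc _ ≤ ENNReal.ofReal (∑ i, |∫ ω, f i (Z ω) (W ω, U ω i) ∂μ|) :=
          ENNReal.ofReal_le_ofReal (Finset.abs_sum_le_sum_abs _ _)
      _ = ∑ i, ENNReal.ofReal |∫ ω, f i (Z ω) (W ω, U ω i) ∂μ| :=
          ENNReal.ofReal_sum_of_nonneg fun _ _ => abs_nonneg _
      _ ≤ _ := Finset.sum_le_sum fun i _ => hint i
  refine hLHS.trans ?_
  -- the event that the first label equals `y`
  let c : Fin n → 𝒴 → (Fin n → (𝒳 × 𝒴) × (𝒳 × 𝒴)) → ℝ≥0∞ := fun i y z =>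
    if (z i).1.2 = y then 1 else 0
  have hcm : ∀ i y, Measurable (c i y) := by
    intro i y
    refine Measurable.ite ?_ measurable_const measurable_const
    have : Measurable fun z : Fin n → (𝒳 × 𝒴) × (𝒳 × 𝒴) => (z i).1.2 := by fun_prop
    exact this (measurableSet_singleton y)
  have hch : ∀ i y, Measurable fun z => c i y z * h i z := fun i y => (hcm i y).mul (hm i)
  have hcsum : ∀ i z, ∑' y, c i y z = 1 := by
    intro i z
    simp only [c]
    exact tsum_ite_eq' _ _
  have hnull : ∀ i y, PZ (Prod.snd ⁻¹' {y}) = 0 → ∫⁻ z, c i y z * h i z ∂(μ.map Z) = 0 := by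
    intro i y hy
    have hms : MeasurableSet (Prod.snd ⁻¹' {y} : Set (𝒳 × 𝒴)) :=
      measurable_snd (measurableSet_singleton y)
    have h0 : ∀ᵐ z ∂(μ.map Z), (z i).1.2 ≠ y := by
      rw [hQ]
      have hmp := (measurePreserving_fst (μ := PZ) (ν := PZ)).comp
        (measurePreserving_eval (fun _ : Fin n => PZ.prod PZ) i)
      have := hmp.measure_preimage hms.nullMeasurableSet
      rw [hy] at this
      exact measure_eq_zero_iff_ae_notMem.1 this
    rw [← lintegral_zero (μ := μ.map Z)]
    refine lintegral_congr_ae ?_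
    filter_upwards [h0] with z hz
    simp [c, hz]
  have hPm : ∀ y, (PZ.map Prod.snd) {y} = PZ (Prod.snd ⁻¹' {y}) := fun y =>
    Measure.map_apply measurable_snd (measurableSet_singleton y)
  rw [lintegral_countable']
  calc ENNReal.ofReal (1 / n) * ∑ i, ∫⁻ z, h i z ∂(μ.map Z)
      = ENNReal.ofReal (1 / n) * ∑ i, ∑' y, ∫⁻ z, c i y z * h i z ∂(μ.map Z) := by
        congr 1
        refine Finset.sum_congr rfl fun i _ => ?_
        rw [← lintegral_tsum fun y => (hch i y).aemeasurable]
        refine lintegral_congr fun z => ?_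
        rw [ENNReal.tsum_mul_right, hcsum, one_mul]
    _ = ∑' y, ENNReal.ofReal (1 / n) * ∑ i, ∫⁻ z, c i y z * h i z ∂(μ.map Z) := by
        rw [ENNReal.tsum_mul_left, Summable.tsum_finsetSum fun i _ => ENNReal.summable]
    _ ≤ _ := by
        refine ENNReal.tsum_le_tsum fun y => ?_
        rw [hPm]
        by_cases hy : PZ (Prod.snd ⁻¹' {y}) = 0
        · simp [hnull _ y hy]
        set p := PZ (Prod.snd ⁻¹' {y}) with hp
        have hpt : p ≠ ∞ := measure_ne_top _ _
        have hp0 : 0 < p.toReal := ENNReal.toReal_pos hy hpt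
        have hpc : ENNReal.ofReal (1 / n) = ENNReal.ofReal (1 / (n * p.toReal)) * p := by
          conv_rhs => rw [← ENNReal.ofReal_toReal hpt]
          rw [ENNReal.toReal_ofReal hp0.le, ← ENNReal.ofReal_mul (by positivity)]
          congr 1
          field_simp
        rw [hpc, mul_right_comm]
        gcongr
        rw [← lintegral_finsetSum _ fun i _ => hch i y,
          ← lintegral_const_mul _ (Finset.measurable_sum _ fun i _ => hch i y)]
        refine lintegral_mono_ae ?_
        filter_upwards [ae_all_iff.2 hle] with z hz
        gcongr with i _
        simp only [c]
        by_cases hzy : (z i).1.2 = y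
        · rw [if_pos hzy, one_mul]
          refine (hz i).trans ?_
          gcongr
          calc (2 : ℝ≥0∞) = 2 * 1 := by simp
            _ ≤ _ := by gcongr; exact le_max_left _ _
        · simp [hzy]
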